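/- arXiv:1901.06945 — 2 statements merged into one kernel-verified Lean document; each statement's English description precedes it below -/
import Mathlib

section
/- Consider cliques in Γ_{-2,0}, i.e. sets of roots whose pairwise dot products lie in {-2,0}. Every maximal clique in Γ_{-2,0} has size 16 and is of the form {e1,…,e8,-e1,…,-e8} for some pairwise orthogonal roots e1,…,e8; there are exactly 2025 maximal cliques in Γ_{-2,0}, and the Weyl group W acts transitively on the set of maximal cliques in Γ_{-2,0}. -/
noncomputable section

/-- The standard dot product on ℝ^8. -/
def dot (a b : Fin 8 → ℝ) : ℝ := ∑ i, a i * b i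

/-- Membership in the E8 lattice Λ: all coordinates are integers or all lie in ℤ + 1/2,
and the coordinates sum to an even integer. -/
def inLambda (a : Fin 8 → ℝ) : Prop :=
  ((∀ i, ∃ n : ℤ, a i = n) ∨ (∀ i, ∃ n : ℤ, a i = n + 1 / 2)) ∧
    ∃ n : ℤ, (∑ i, a i) = 2 * n

/-- The E8 root system E: lattice vectors of squared norm 2. -/
def isRoot (a : Fin 8 → ℝ) : Prop := inLambda a ∧ dot a a = 2

/-- The Weyl group W: linear isometries of ℝ^8 mapping the root system E onto itself. -/
def IsWeyl (w : (Fin 8 → ℝ) ≃ₗ[ℝ] (Fin 8 → ℝ)) : Prop :=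
  (∀ a b : Fin 8 → ℝ, dot (w a) (w b) = dot a b) ∧
    (⇑w '' {a | isRoot a} = {a | isRoot a})

/-- A clique in the colored graph `Γ_c`: a set of roots whose pairwise dot products
lie in the color set `c`. -/
def IsClique (c : Set ℝ) (K : Finset (Fin 8 → ℝ)) : Prop :=
  (∀ e ∈ K, isRoot e) ∧ ∀ e ∈ K, ∀ f ∈ K, e ≠ f → dot e f ∈ c

/-- A maximal clique in `Γ_c`: a clique not properly contained in another clique. -/
def IsMaxClique (c : Set ℝ) (K : Finset (Fin 8 → ℝ)) : Prop :=
  IsClique c K ∧ ∀ K' : Finset (Fin 8 → ℝ), IsClique c K' → K ⊆ K' → K' = K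


/-! Part A: computable model of the roots (doubled coordinates). -/

def en (ch : List ℤ) : ℕ → ℤ → List (List ℤ)
  | 0, b => if b = 0 then [[]] else []
  | k + 1, b => ch.flatMap fun x =>
      if x * x ≤ b then (en ch k (b - x * x)).map (fun l => x :: l) else []

def sumL : List ℤ → ℤ
  | [] => 0
  | a :: l => a + sumL l

def dotL : List ℤ → List ℤ → ℤ
  | a :: l, b :: m => a * b + dotL l m
  | _, _ => 0

def negL (l : List ℤ) : List ℤ := l.map (fun x => -x)

def RL : List (List ℤ) :=
  (en [-2, 0, 2] 8 8 ++ en [-1, 1] 8 8).filter (fun l => sumL l % 4 = 0)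

def okL (u v : List ℤ) : Bool := dotL u v = 0 || dotL u v = 8 || dotL u v = -8

def pl (i j : ℕ) : List ℤ := (List.range 8).map fun k => if k = i ∨ k = j then 2 else 0
def mi (i j : ℕ) : List ℤ :=
  (List.range 8).map fun k => if k = i then 2 else if k = j then -2 else 0

def t0 : List ℤ := [2, 2, 0, 0, 0, 0, 0, 0]
def t1 : List ℤ := [2, -2, 0, 0, 0, 0, 0, 0]
def t2 : List ℤ := [0, 0, 2, 2, 0, 0, 0, 0]
def t3 : List ℤ := [0, 0, 0, 0, 2, 2, 0, 0]

def edges : List (ℕ × ℕ) :=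
  [(2, 3), (2, 4), (2, 5), (2, 6), (2, 7), (3, 4), (3, 5), (3, 6), (3, 7), (4, 5), (4, 6),
   (4, 7), (5, 6), (5, 7), (6, 7)]

def P30 : List (List ℤ) := edges.flatMap fun p => [pl p.1 p.2, mi p.1 p.2]

def fr (a b c d e f : ℕ) : List (List ℤ) :=
  [t0, t1, pl a b, mi a b, pl c d, mi c d, pl e f, mi e f]

def L15 : List (List (List ℤ)) :=
  [fr 2 3 4 5 6 7, fr 2 3 4 6 5 7, fr 2 3 4 7 5 6,
   fr 2 4 3 5 6 7, fr 2 4 3 6 5 7, fr 2 4 3 7 5 6,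
   fr 2 5 3 4 6 7, fr 2 5 3 6 4 7, fr 2 5 3 7 4 6,
   fr 2 6 3 4 5 7, fr 2 6 3 5 4 7, fr 2 6 3 7 4 5,
   fr 2 7 3 4 5 6, fr 2 7 3 5 4 6, fr 2 7 3 6 4 5]

def chk (L : List (List (List ℤ))) : List (List ℤ) → List (List ℤ) → Bool
  | [], c => L.any fun l => c.all fun u => l.contains u
  | v :: P, c => (!(c.all fun u => okL u v) || chk L P (v :: c)) && chk L P c

theorem RL_length : RL.length = 240 := by decide +kernel
def codeL (l : List ℤ) : ℤ := l.foldl (fun s x => 5 * s + x) (100 * (l.headD 0 % 2))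
theorem RL_chain : (RL.map codeL).IsChain (· < ·) := by decide +kernel
theorem RL_nodup : RL.Nodup := by
  have h := RL_chain.pairwise
  exact List.Nodup.of_map codeL (h.imp (fun h => ne_of_lt h))
theorem RL_len8 : ∀ u ∈ RL, u.length = 8 := by decide +kernel
theorem RL_norm : ∀ u ∈ RL, dotL u u = 8 := by decide +kernel
theorem RL_even : ∀ u ∈ RL, sumL u % 4 = 0 ∧ ((∀ x ∈ u, x % 2 = 0) ∨ (∀ x ∈ u, x % 2 = 1)) := by
  decide +kernel
theorem RL_perp_length : (RL.filter fun u => dotL u t0 = 0).length = 126 := by decide +kernel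
theorem t_orth : dotL t0 t1 = 0 ∧ dotL t0 t2 = 0 ∧ dotL t1 t2 = 0 ∧ dotL t0 t3 = 0 ∧ dotL t1 t3 = 0 ∧
    dotL t2 t3 = 0 := by decide +kernel
theorem P30_RL : ∀ u ∈ P30, u ∈ RL := by decide +kernel
theorem t_mem : t0 ∈ RL ∧ t1 ∈ RL ∧ t2 ∈ RL ∧ t3 ∈ RL := by decide +kernel

def linkB (T : List (List ℤ)) (t u : List ℤ) : Bool :=
  dotL u t = 8 || dotL u t = -8 || dotL u t = 4 || dotL u t = -4 ||
    RL.any fun g => (dotL g t = 4 || dotL g t = -4) && (dotL u g = 4 || dotL u g = -4) &&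
      T.all fun s => dotL s g = 0

theorem link0 : ∀ u ∈ RL, linkB [] t0 u := by decide +kernel
theorem link1 : ∀ u ∈ RL, dotL t0 u = 0 → linkB [t0] t1 u := by decide +kernel
theorem link2 : ∀ u ∈ RL, dotL t0 u = 0 → dotL t1 u = 0 → linkB [t0, t1] t2 u := by
  decide +kernel
theorem L15_t2 : ∀ l ∈ L15, t2 ∈ l ++ l.map negL → ∃ u ∈ l, dotL t0 u = 0 ∧ dotL t1 u = 0 ∧
    dotL t2 u = 0 ∧ linkB [t0, t1, t2] t3 u := by decide +kernel
theorem L15_t3 : ∀ l ∈ L15, t2 ∈ l ++ l.map negL → t3 ∈ l ++ l.map negL →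
    l = fr 2 3 4 5 6 7 := by decide +kernel
theorem L15_sub : ∀ l ∈ L15, ∃ u ∈ l, dotL t0 u = 0 ∧ dotL t1 u = 0 := by decide +kernel
theorem cover : ∀ u ∈ RL, okL u t0 → okL u t1 →
    (u ∈ t0 :: t1 :: P30 ∨ negL u ∈ t0 :: t1 :: P30) := by decide +kernel
theorem chk_true : chk L15 P30 [t1, t0] = true := by decide +kernel
theorem L15_nodup : L15.Nodup := by decide +kernel
theorem L15_length : L15.length = 15 := by decide +kernel
theorem L15_RL : ∀ l ∈ L15, ∀ u ∈ l, u ∈ RL := by decide +kernel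
theorem L15_len : ∀ l ∈ L15, l.length = 8 := by decide +kernel
theorem L15_t01 : ∀ l ∈ L15, t0 ∈ l ∧ t1 ∈ l := by decide +kernel
theorem L15_fnodup : ∀ l ∈ L15, (l ++ l.map negL).Nodup := by decide +kernel
theorem L15_orth : ∀ l ∈ L15, l.Pairwise (fun u v => dotL u v = 0) := by decide +kernel
theorem L15_max : ∀ l ∈ L15, ∀ u ∈ RL, ∃ v ∈ l, dotL v u ≠ 0 := by decide +kernel
theorem L15_inj : ∀ l ∈ L15, ∀ l' ∈ L15, (∀ u ∈ l, u ∈ l' ++ l'.map negL) → l = l' := by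
  decide +kernel

/-! Part B: the bridge to real vectors. -/

def phi (u : List ℤ) : Fin 8 → ℝ := fun i => (u.getD i.1 0 : ℝ) / 2

theorem len8 {u : List ℤ} (h : u.length = 8) :
    ∃ a b c d e f g k, u = [a, b, c, d, e, f, g, k] := by
  match u, h with
  | [a, b, c, d, e, f, g, k], _ => exact ⟨a, b, c, d, e, f, g, k, rfl⟩

theorem dot_phi {u v : List ℤ} (hu : u.length = 8) (hv : v.length = 8) :
    dot (phi u) (phi v) = (dotL u v : ℝ) / 4 := by
  obtain ⟨a, b, c, d, e, f, g, k, rfl⟩ := len8 hu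
  obtain ⟨a', b', c', d', e', f', g', k', rfl⟩ := len8 hv
  simp [dot, phi, dotL, Fin.sum_univ_eight]
  ring

theorem phi_inj {u v : List ℤ} (hu : u.length = 8) (hv : v.length = 8) (h : phi u = phi v) :
    u = v := by
  obtain ⟨a, b, c, d, e, f, g, k, rfl⟩ := len8 hu
  obtain ⟨a', b', c', d', e', f', g', k', rfl⟩ := len8 hv
  have h0 := congrFun h 0
  have h1 := congrFun h 1
  have h2 := congrFun h 2
  have h3 := congrFun h 3
  have h4 := congrFun h 4
  have h5 := congrFun h 5
  have h6 := congrFun h 6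
  have h7 := congrFun h 7
  simp [phi] at h0 h1 h2 h3 h4 h5 h6 h7
  simp [*]

theorem phi_neg (u : List ℤ) : phi (negL u) = -phi u := by
  funext i
  simp only [phi, negL, Pi.neg_apply, List.getD_eq_getElem?_getD, List.getElem?_map]
  cases u[i.1]? <;> simp [neg_div]

theorem en_spec (ch : List ℤ) (l : List ℤ) : (∀ x ∈ l, x ∈ ch) →
    l ∈ en ch l.length (dotL l l) := by
  induction l with
  | nil => intro _; simp [en, dotL]
  | cons a l ih =>
    intro h
    have hn : ∀ m : List ℤ, 0 ≤ dotL m m := by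
      intro m
      induction m with
      | nil => simp [dotL]
      | cons b m ih => simp only [dotL]; nlinarith [mul_self_nonneg b]
    simp only [List.length_cons, en, List.mem_flatMap]
    refine ⟨a, h a (by simp), ?_⟩
    have := hn l
    rw [if_pos (by simp only [dotL]; linarith)]
    simp only [dotL, add_sub_cancel_left, List.mem_map]
    exact ⟨l, ih (fun x hx => h x (by simp [hx])), rfl⟩

theorem root_imp {a : Fin 8 → ℝ} (h : isRoot a) : ∃ u ∈ RL, a = phi u := by
  obtain ⟨⟨h1, N, hN⟩, h2⟩ := h
  simp only [dot, Fin.sum_univ_eight] at h2 hN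
  rcases h1 with h1 | h1
  · choose n hn using h1
    simp only [hn] at h2 hN
    have e2 : n 0 * n 0 + n 1 * n 1 + n 2 * n 2 + n 3 * n 3 + n 4 * n 4 + n 5 * n 5 + n 6 * n 6
      + n 7 * n 7 = 2 := by exact_mod_cast h2
    have eN : n 0 + n 1 + n 2 + n 3 + n 4 + n 5 + n 6 + n 7 = 2 * N := by exact_mod_cast hN
    have sq : ∀ i, n i * n i ≤ 2 := by
      have := fun i => mul_self_nonneg (n i)
      have q0 := this 0
      have q1 := this 1
      have q2 := this 2
      have q3 := this 3
      have q4 := this 4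
      have q5 := this 5
      have q6 := this 6
      have q7 := this 7
      intro i
      fin_cases i <;> simp <;> linarith
    have bd : ∀ i, 2 * n i ∈ ([-2, 0, 2] : List ℤ) := by
      intro i
      have := sq i
      have l1 : -2 < n i := by nlinarith
      have l2 : n i < 2 := by nlinarith
      have : n i = -1 ∨ n i = 0 ∨ n i = 1 := by omega
      rcases this with h | h | h <;> simp [h]
    let l : List ℤ := [2 * n 0, 2 * n 1, 2 * n 2, 2 * n 3, 2 * n 4, 2 * n 5, 2 * n 6, 2 * n 7]
    refine ⟨l, ?_, ?_⟩
    · rw [RL, List.mem_filter, List.mem_append]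
      constructor
      · left
        have := en_spec [-2, 0, 2] l (by
          intro x hx
          simp only [l, List.mem_cons, List.not_mem_nil, or_false] at hx
          rcases hx with h | h | h | h | h | h | h | h <;> rw [h] <;> exact bd _)
        have hd : dotL l l = 8 := by simp only [l, dotL]; linarith
        rw [hd] at this
        exact this
      · apply decide_eq_true; simp only [l, sumL]; omega
    · funext i
      rw [hn]
      fin_cases i <;> simp [l, phi]
  · choose n hn using h1
    simp only [hn] at h2 hN
    have e2 : (2 * n 0 + 1) * (2 * n 0 + 1) + (2 * n 1 + 1) * (2 * n 1 + 1)
      + (2 * n 2 + 1) * (2 * n 2 + 1) + (2 * n 3 + 1) * (2 * n 3 + 1)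
      + (2 * n 4 + 1) * (2 * n 4 + 1) + (2 * n 5 + 1) * (2 * n 5 + 1)
      + (2 * n 6 + 1) * (2 * n 6 + 1) + (2 * n 7 + 1) * (2 * n 7 + 1) = 8 := by
      have : ((2 * n 0 + 1) * (2 * n 0 + 1) + (2 * n 1 + 1) * (2 * n 1 + 1)
        + (2 * n 2 + 1) * (2 * n 2 + 1) + (2 * n 3 + 1) * (2 * n 3 + 1)
        + (2 * n 4 + 1) * (2 * n 4 + 1) + (2 * n 5 + 1) * (2 * n 5 + 1)
        + (2 * n 6 + 1) * (2 * n 6 + 1) + (2 * n 7 + 1) * (2 * n 7 + 1) : ℝ) = 8 := by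
        linarith
      exact_mod_cast this
    have eN : n 0 + n 1 + n 2 + n 3 + n 4 + n 5 + n 6 + n 7 + 4 = 2 * N := by
      have : (n 0 + n 1 + n 2 + n 3 + n 4 + n 5 + n 6 + n 7 + 4 : ℝ) = 2 * N := by linarith
      exact_mod_cast this
    have pos : ∀ i, 0 ≤ n i * (n i + 1) := by
      intro i
      rcases le_or_gt 0 (n i) with h | h
      · positivity
      · nlinarith
    have z : ∀ i, n i * (n i + 1) = 0 := by
      have q0 := pos 0
      have q1 := pos 1
      have q2 := pos 2
      have q3 := pos 3
      have q4 := pos 4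
      have q5 := pos 5
      have q6 := pos 6
      have q7 := pos 7
      intro i
      fin_cases i <;> simp only [Fin.zero_eta, Fin.mk_one, Fin.reduceFinMk] <;> linarith
    have bd : ∀ i, 2 * n i + 1 ∈ ([-1, 1] : List ℤ) := by
      intro i
      rcases mul_eq_zero.1 (z i) with h | h
      · simp [h]
      · have : n i = -1 := by linarith
        simp [this]
    let l : List ℤ := [2 * n 0 + 1, 2 * n 1 + 1, 2 * n 2 + 1, 2 * n 3 + 1, 2 * n 4 + 1,
      2 * n 5 + 1, 2 * n 6 + 1, 2 * n 7 + 1]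
    refine ⟨l, ?_, ?_⟩
    · rw [RL, List.mem_filter, List.mem_append]
      constructor
      · right
        have := en_spec [-1, 1] l (by
          intro x hx
          simp only [l, List.mem_cons, List.not_mem_nil, or_false] at hx
          rcases hx with h | h | h | h | h | h | h | h <;> rw [h] <;> exact bd _)
        have hd : dotL l l = 8 := by simp only [l, dotL]; linarith
        rw [hd] at this
        exact this
      · apply decide_eq_true; simp only [l, sumL]; omega
    · funext i
      rw [hn]
      fin_cases i <;> simp [l, phi] <;> ring

theorem root_phi {u : List ℤ} (hu : u ∈ RL) : isRoot (phi u) := by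
  have h8 := RL_len8 u hu
  have hn := RL_norm u hu
  have he := RL_even u hu
  refine ⟨?_, by rw [dot_phi h8 h8, hn]; norm_num⟩
  clear hn
  obtain ⟨a, b, c, d, e, f, g, k, rfl⟩ := len8 h8
  obtain ⟨h1, h2⟩ := he
  constructor
  · rcases h2 with h2 | h2
    · left
      intro i
      have : ([a, b, c, d, e, f, g, k] : List ℤ).getD i.1 0 % 2 = 0 := by
        apply h2
        fin_cases i <;> simp
      refine ⟨([a, b, c, d, e, f, g, k] : List ℤ).getD i.1 0 / 2, ?_⟩
      have h3 := Int.mul_ediv_add_emod (([a, b, c, d, e, f, g, k] : List ℤ).getD i.1 0) 2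
      rw [this] at h3
      have h4 : (2 * ((([a, b, c, d, e, f, g, k] : List ℤ).getD i.1 0 / 2 : ℤ) : ℝ) + 0) =
        (([a, b, c, d, e, f, g, k] : List ℤ).getD i.1 0 : ℝ) := by exact_mod_cast h3
      rw [phi]
      linarith
    · right
      intro i
      have : ([a, b, c, d, e, f, g, k] : List ℤ).getD i.1 0 % 2 = 1 := by
        apply h2
        fin_cases i <;> simp
      refine ⟨([a, b, c, d, e, f, g, k] : List ℤ).getD i.1 0 / 2, ?_⟩
      have h3 := Int.mul_ediv_add_emod (([a, b, c, d, e, f, g, k] : List ℤ).getD i.1 0) 2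
      rw [this] at h3
      have h4 : (2 * ((([a, b, c, d, e, f, g, k] : List ℤ).getD i.1 0 / 2 : ℤ) : ℝ) + 1) =
        (([a, b, c, d, e, f, g, k] : List ℤ).getD i.1 0 : ℝ) := by exact_mod_cast h3
      rw [phi]
      linarith
  · refine ⟨sumL [a, b, c, d, e, f, g, k] / 4, ?_⟩
    have h3 := Int.mul_ediv_add_emod (sumL [a, b, c, d, e, f, g, k]) 4
    rw [h1] at h3
    have h4 : (4 * ((sumL [a, b, c, d, e, f, g, k] / 4 : ℤ) : ℝ) + 0) =
      (sumL [a, b, c, d, e, f, g, k] : ℝ) := by exact_mod_cast h3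
    have h5 : (∑ i, phi [a, b, c, d, e, f, g, k] i) = (sumL [a, b, c, d, e, f, g, k] : ℝ) / 2 := by
      simp [phi, sumL, Fin.sum_univ_eight]
      ring
    rw [h5]
    linarith

/-! Part C: reflections and the Weyl group. -/

theorem dot_add_left (a b c : Fin 8 → ℝ) : dot (a + b) c = dot a c + dot b c := by
  simp [dot, add_mul, Finset.sum_add_distrib]
theorem dot_smul_left (r : ℝ) (a c : Fin 8 → ℝ) : dot (r • a) c = r * dot a c := by
  simp [dot, mul_assoc, Finset.mul_sum]
theorem dot_comm (a b : Fin 8 → ℝ) : dot a b = dot b a := by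
  simp [dot, mul_comm]
theorem dot_neg_left (a c : Fin 8 → ℝ) : dot (-a) c = -dot a c := by
  simp [dot]
theorem dot_neg_right (a c : Fin 8 → ℝ) : dot a (-c) = -dot a c := by
  simp [dot]
theorem dot_sub_left (a b c : Fin 8 → ℝ) : dot (a - b) c = dot a c - dot b c := by
  rw [sub_eq_add_neg, dot_add_left, dot_neg_left]; ring
theorem dot_add_right (a b c : Fin 8 → ℝ) : dot c (a + b) = dot c a + dot c b := by
  rw [dot_comm, dot_add_left, dot_comm a, dot_comm b]
theorem dot_sub_right (a b c : Fin 8 → ℝ) : dot c (a - b) = dot c a - dot c b := by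
  rw [dot_comm, dot_sub_left, dot_comm a, dot_comm b]
theorem dot_smul_right (r : ℝ) (a c : Fin 8 → ℝ) : dot c (r • a) = r * dot c a := by
  rw [dot_comm, dot_smul_left, dot_comm]

theorem dot_self_zero {a : Fin 8 → ℝ} (h : dot a a = 0) : a = 0 := by
  funext i
  have := (Finset.sum_eq_zero_iff_of_nonneg (fun i _ => mul_self_nonneg (a i))).1 h i
    (Finset.mem_univ i)
  exact mul_self_eq_zero.1 this

theorem eq_of_dot {a b : Fin 8 → ℝ} (ha : isRoot a) (hb : isRoot b) (h : dot a b = 2) :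
    a = b := by
  have : dot (a - b) (a - b) = 0 := by
    rw [dot_sub_left, dot_sub_right, dot_sub_right, dot_comm b a, ha.2, hb.2, h]; norm_num
  exact sub_eq_zero.1 (dot_self_zero this)

theorem eq_neg_of_dot {a b : Fin 8 → ℝ} (ha : isRoot a) (hb : isRoot b) (h : dot a b = -2) :
    a = -b := by
  have : dot (a + b) (a + b) = 0 := by
    rw [dot_add_left, dot_add_right, dot_add_right, dot_comm b a, ha.2, hb.2, h]; norm_num
  exact eq_neg_of_add_eq_zero_left (dot_self_zero this)

theorem lam_add {a b : Fin 8 → ℝ} (ha : inLambda a) (hb : inLambda b) : inLambda (a + b) := by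
  obtain ⟨h1, N, hN⟩ := ha
  obtain ⟨h2, M, hM⟩ := hb
  refine ⟨?_, N + M, by simp [Finset.sum_add_distrib, hN, hM]; ring⟩
  rcases h1 with h1 | h1 <;> rcases h2 with h2 | h2
  · left; intro i; obtain ⟨n, hn⟩ := h1 i; obtain ⟨m, hm⟩ := h2 i
    exact ⟨n + m, by simp [hn, hm]⟩
  · right; intro i; obtain ⟨n, hn⟩ := h1 i; obtain ⟨m, hm⟩ := h2 i
    exact ⟨n + m, by simp [hn, hm]; ring⟩
  · right; intro i; obtain ⟨n, hn⟩ := h1 i; obtain ⟨m, hm⟩ := h2 i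
    exact ⟨n + m, by simp [hn, hm]; ring⟩
  · left; intro i; obtain ⟨n, hn⟩ := h1 i; obtain ⟨m, hm⟩ := h2 i
    exact ⟨n + m + 1, by simp [hn, hm]; ring⟩

theorem lam_neg {a : Fin 8 → ℝ} (ha : inLambda a) : inLambda (-a) := by
  obtain ⟨h1, N, hN⟩ := ha
  refine ⟨?_, -N, by simp [hN]⟩
  rcases h1 with h1 | h1
  · left; intro i; obtain ⟨n, hn⟩ := h1 i
    exact ⟨-n, by simp [hn]⟩
  · right; intro i; obtain ⟨n, hn⟩ := h1 i
    exact ⟨-n - 1, by simp [hn]; ring⟩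

def Lam : AddSubgroup (Fin 8 → ℝ) where
  carrier := {a | inLambda a}
  zero_mem' := ⟨Or.inl fun _ => ⟨0, by simp⟩, 0, by simp⟩
  add_mem' := lam_add
  neg_mem' := lam_neg

theorem lam_dot_aux {a b : Fin 8 → ℝ} (ha : ∀ i, ∃ n : ℤ, a i = n) (hN : ∃ n : ℤ, (∑ i, a i) = 2 * n)
    (hb : inLambda b) : ∃ k : ℤ, dot a b = k := by
  obtain ⟨N, hN⟩ := hN
  choose n hn using ha
  obtain ⟨h2, M, hM⟩ := hb
  rcases h2 with h2 | h2
  · choose m hm using h2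
    exact ⟨∑ i, n i * m i, by simp [dot, hn, hm]⟩
  · choose m hm using h2
    refine ⟨∑ i, n i * m i + N, ?_⟩
    simp only [hn] at hN
    simp only [dot, hn, hm, mul_add, Finset.sum_add_distrib, ← Finset.sum_mul, hN]
    push_cast
    ring

theorem lam_dot {a b : Fin 8 → ℝ} (ha : inLambda a) (hb : inLambda b) : ∃ k : ℤ, dot a b = k := by
  rcases ha.1 with h1 | h1
  · exact lam_dot_aux h1 ha.2 hb
  · rcases hb.1 with h2 | h2
    · rw [dot_comm]; exact lam_dot_aux h2 hb.2 ha
    · choose n hn using h1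
      choose m hm using h2
      obtain ⟨-, N, hN⟩ := ha
      obtain ⟨-, M, hM⟩ := hb
      refine ⟨∑ i, n i * m i + N + M - 2, ?_⟩
      simp only [hn, hm, Finset.sum_add_distrib] at hN hM
      simp only [Finset.sum_const, Finset.card_univ, Fintype.card_fin, nsmul_eq_mul] at hN hM
      simp only [dot, hn, hm, mul_add, add_mul, Finset.sum_add_distrib, ← Finset.sum_mul,
        ← Finset.mul_sum, Finset.sum_const, Finset.card_univ, Fintype.card_fin, nsmul_eq_mul]
      push_cast at hN hM ⊢
      linarith

theorem root_neg {a : Fin 8 → ℝ} (ha : isRoot a) : isRoot (-a) :=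
  ⟨lam_neg ha.1, by rw [dot_neg_left, dot_neg_right, neg_neg, ha.2]⟩

def reflF (r : Fin 8 → ℝ) : (Fin 8 → ℝ) →ₗ[ℝ] (Fin 8 → ℝ) where
  toFun x := x - dot x r • r
  map_add' x y := by rw [dot_add_left]; module
  map_smul' c x := by rw [dot_smul_left]; simp only [RingHom.id_apply]; module

theorem reflF_apply (r x : Fin 8 → ℝ) : reflF r x = x - dot x r • r := rfl

theorem reflF_inv {r : Fin 8 → ℝ} (hr : isRoot r) : Function.Involutive (reflF r) := by
  intro x
  rw [reflF_apply, reflF_apply, dot_sub_left, dot_smul_left, hr.2]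
  module

def rfx {r : Fin 8 → ℝ} (hr : isRoot r) : (Fin 8 → ℝ) ≃ₗ[ℝ] (Fin 8 → ℝ) :=
  LinearEquiv.ofInvolutive (reflF r) (reflF_inv hr)

theorem rfx_apply {r : Fin 8 → ℝ} (hr : isRoot r) (x : Fin 8 → ℝ) :
    rfx hr x = x - dot x r • r := rfl

theorem rfx_dot {r : Fin 8 → ℝ} (hr : isRoot r) (a b : Fin 8 → ℝ) :
    dot (rfx hr a) (rfx hr b) = dot a b := by
  rw [rfx_apply, rfx_apply, dot_sub_left, dot_sub_right, dot_sub_right, dot_smul_left,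
    dot_smul_left, dot_smul_right, dot_smul_right, hr.2, dot_comm r b]
  ring

theorem rfx_root {r : Fin 8 → ℝ} (hr : isRoot r) {a : Fin 8 → ℝ} (ha : isRoot a) :
    isRoot (rfx hr a) := by
  refine ⟨?_, by rw [rfx_dot, ha.2]⟩
  obtain ⟨k, hk⟩ := lam_dot ha.1 hr.1
  rw [rfx_apply, hk]
  have h1 : a ∈ Lam := ha.1
  have h2 : r ∈ Lam := hr.1
  have h3 : a - k • r ∈ Lam := sub_mem h1 (zsmul_mem h2 k)
  rw [← Int.cast_smul_eq_zsmul ℝ] at h3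
  exact h3

theorem rfx_weyl {r : Fin 8 → ℝ} (hr : isRoot r) : IsWeyl (rfx hr) := by
  refine ⟨rfx_dot hr, ?_⟩
  apply Set.Subset.antisymm
  · rintro _ ⟨a, ha, rfl⟩
    exact rfx_root hr ha
  · intro a ha
    exact ⟨rfx hr a, rfx_root hr ha, reflF_inv hr a⟩

theorem IsWeyl.root {w : (Fin 8 → ℝ) ≃ₗ[ℝ] (Fin 8 → ℝ)} (hw : IsWeyl w) {a : Fin 8 → ℝ}
    (ha : isRoot a) : isRoot (w a) := by
  have : w a ∈ ⇑w '' {a | isRoot a} := ⟨a, ha, rfl⟩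
  rw [hw.2] at this
  exact this

theorem IsWeyl.symm {w : (Fin 8 → ℝ) ≃ₗ[ℝ] (Fin 8 → ℝ)} (hw : IsWeyl w) : IsWeyl w.symm := by
  refine ⟨fun a b => by rw [← hw.1]; simp, ?_⟩
  conv_lhs => rw [← hw.2]
  rw [← Set.image_comp]
  simp

theorem IsWeyl.trans {w v : (Fin 8 → ℝ) ≃ₗ[ℝ] (Fin 8 → ℝ)} (hw : IsWeyl w) (hv : IsWeyl v) :
    IsWeyl (w.trans v) := by
  refine ⟨fun a b => by simp [hw.1, hv.1], ?_⟩
  have : (⇑(w.trans v) : (Fin 8 → ℝ) → (Fin 8 → ℝ)) = ⇑v ∘ ⇑w := rfl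
  rw [this, Set.image_comp, hw.2, hv.2]

theorem weyl_refl : IsWeyl (LinearEquiv.refl ℝ (Fin 8 → ℝ)) := ⟨fun _ _ => rfl, Set.image_id _⟩

def near (a b : Fin 8 → ℝ) : Prop := dot a b = 1 ∨ dot a b = -1 ∨ dot a b = 2 ∨ dot a b = -2

theorem move1 {e t : Fin 8 → ℝ} (he : isRoot e) (ht : isRoot t) (h : near e t) :
    ∃ w, IsWeyl w ∧ w e = t ∧ ∀ x, dot x e = 0 → dot x t = 0 → w x = x := by
  have hneg : ∀ x, x = -t → rfx ht x = t := by
    rintro x rfl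
    rw [rfx_apply, dot_neg_left, ht.2]; module
  rcases h with h | h | h | h
  · have hr : isRoot (e - t) := ⟨by
      rw [sub_eq_add_neg]; exact lam_add he.1 (lam_neg ht.1), by
      rw [dot_sub_left, dot_sub_right, dot_sub_right, dot_comm t e, he.2, ht.2, h]; norm_num⟩
    refine ⟨rfx hr, rfx_weyl hr, ?_, ?_⟩
    · rw [rfx_apply, dot_sub_right, he.2, h]; module
    · intro x hx hx'
      rw [rfx_apply, dot_sub_right, hx, hx']; module
  · have hr : isRoot (e + t) := ⟨lam_add he.1 ht.1, by
      rw [dot_add_left, dot_add_right, dot_add_right, dot_comm t e, he.2, ht.2, h]; norm_num⟩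
    refine ⟨(rfx hr).trans (rfx ht), (rfx_weyl hr).trans (rfx_weyl ht), ?_, ?_⟩
    · rw [LinearEquiv.trans_apply]
      apply hneg
      rw [rfx_apply, dot_add_right, he.2, h]; module
    · intro x hx hx'
      have : rfx hr x = x := by rw [rfx_apply, dot_add_right, hx, hx']; module
      rw [LinearEquiv.trans_apply, this, rfx_apply, hx']; module
  · exact ⟨LinearEquiv.refl ℝ _, weyl_refl, eq_of_dot he ht h, fun _ _ _ => rfl⟩
  · refine ⟨rfx ht, rfx_weyl ht, hneg _ (eq_neg_of_dot he ht h), ?_⟩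
    intro x _ hx'
    rw [rfx_apply, hx']; module

theorem near_phi {u v : List ℤ} (hu : u ∈ RL) (hv : v ∈ RL)
    (h : dotL u v = 8 ∨ dotL u v = -8 ∨ dotL u v = 4 ∨ dotL u v = -4) : near (phi u) (phi v) := by
  unfold near
  rw [dot_phi (RL_len8 u hu) (RL_len8 v hv)]
  rcases h with h | h | h | h <;> rw [h] <;> norm_num

theorem dot_phi0 {u v : List ℤ} (hu : u ∈ RL) (hv : v ∈ RL) :
    dot (phi u) (phi v) = 0 ↔ dotL u v = 0 := by
  rw [dot_phi (RL_len8 u hu) (RL_len8 v hv)]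
  simp

theorem move {T : List (List ℤ)} {t u : List ℤ} (hT : ∀ s ∈ T, s ∈ RL) (ht : t ∈ RL)
    (hu : u ∈ RL) (hTt : ∀ s ∈ T, dotL s t = 0) (hTu : ∀ s ∈ T, dotL s u = 0)
    (h : linkB T t u = true) :
    ∃ w, IsWeyl w ∧ w (phi u) = phi t ∧ ∀ s ∈ T, w (phi s) = phi s := by
  simp only [linkB, Bool.or_eq_true, decide_eq_true_eq, List.any_eq_true, Bool.and_eq_true,
    List.all_eq_true] at h
  rcases h with h | ⟨g, hg, ⟨h1, h2⟩, h3⟩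
  · obtain ⟨w, hw, h1, h2⟩ := move1 (root_phi hu) (root_phi ht) (near_phi hu ht (by tauto))
    exact ⟨w, hw, h1, fun s hs => h2 _ ((dot_phi0 (hT s hs) hu).2 (hTu s hs))
      ((dot_phi0 (hT s hs) ht).2 (hTt s hs))⟩
  · obtain ⟨w, hw, a1, a2⟩ := move1 (root_phi hu) (root_phi hg) (near_phi hu hg (by tauto))
    obtain ⟨v, hv, b1, b2⟩ := move1 (root_phi hg) (root_phi ht) (near_phi hg ht (by tauto))
    refine ⟨w.trans v, hw.trans hv, by simp [a1, b1], fun s hs => ?_⟩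
    have q := (dot_phi0 (hT s hs) hg).2 (h3 s hs)
    rw [LinearEquiv.trans_apply, a2 _ ((dot_phi0 (hT s hs) hu).2 (hTu s hs)) q,
      b2 _ q ((dot_phi0 (hT s hs) ht).2 (hTt s hs))]

/-! Part D: maximal cliques. -/

theorem cl_dot {K : Finset (Fin 8 → ℝ)} (hK : IsClique {-2, 0} K) {e f : Fin 8 → ℝ} (he : e ∈ K)
    (hf : f ∈ K) : dot e f = 0 ∨ e = f ∨ e = -f := by
  by_cases h : e = f
  · exact Or.inr (Or.inl h)
  · rcases hK.2 e he f hf h with h | h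
    · exact Or.inr (Or.inr (eq_neg_of_dot (hK.1 e he) (hK.1 f hf) h))
    · exact Or.inl h

theorem mx_ext {K : Finset (Fin 8 → ℝ)} (hK : IsMaxClique {-2, 0} K) {f : Fin 8 → ℝ}
    (hf : isRoot f) (h : ∀ g ∈ K, dot f g = 0 ∨ f = g ∨ f = -g) : f ∈ K := by
  have hc : IsClique {-2, 0} (insert f K) := by
    have key : ∀ g ∈ K, f ≠ g → dot f g ∈ ({-2, 0} : Set ℝ) := by
      intro g hg hne
      rcases h g hg with h | h | h
      · right; exact h
      · exact absurd h hne
      · left; rw [h, dot_neg_left, (hK.1.1 g hg).2]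
    constructor
    · intro e he
      rcases Finset.mem_insert.1 he with rfl | he
      · exact hf
      · exact hK.1.1 e he
    · intro a ha b hb hne
      rcases Finset.mem_insert.1 ha with ha1 | ha1 <;>
        rcases Finset.mem_insert.1 hb with hb1 | hb1
      · exact absurd (ha1.trans hb1.symm) hne
      · rw [ha1]; exact key b hb1 (fun h => hne (ha1.trans h))
      · rw [dot_comm, hb1]; exact key a ha1 (fun h => hne (h.symm.trans hb1.symm))
      · exact hK.1.2 a ha1 b hb1 hne
  have := hK.2 _ hc (Finset.subset_insert f K)
  rw [← this]
  exact Finset.mem_insert_self f K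

theorem mx_neg {K : Finset (Fin 8 → ℝ)} (hK : IsMaxClique {-2, 0} K) {f : Fin 8 → ℝ}
    (hf : f ∈ K) : -f ∈ K := by
  refine mx_ext hK (root_neg (hK.1.1 f hf)) fun g hg => ?_
  rcases cl_dot hK.1 hf hg with h | h | h
  · left; rw [dot_neg_left, h, neg_zero]
  · right; right; rw [h]
  · right; left; rw [h, neg_neg]

theorem cl_image {K : Finset (Fin 8 → ℝ)} {c : Set ℝ} (hK : IsClique c K)
    {w : (Fin 8 → ℝ) ≃ₗ[ℝ] (Fin 8 → ℝ)} (hw : IsWeyl w) : IsClique c (K.image w) := by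
  constructor
  · intro e he
    obtain ⟨a, ha, rfl⟩ := Finset.mem_image.1 he
    exact hw.root (hK.1 a ha)
  · intro e he f hf hne
    obtain ⟨a, ha, rfl⟩ := Finset.mem_image.1 he
    obtain ⟨b, hb, rfl⟩ := Finset.mem_image.1 hf
    rw [hw.1]
    exact hK.2 a ha b hb (fun h => hne (by rw [h]))

theorem image_symm (K : Finset (Fin 8 → ℝ)) (w : (Fin 8 → ℝ) ≃ₗ[ℝ] (Fin 8 → ℝ)) :
    (K.image w).image w.symm = K := by
  ext x
  simp [Finset.mem_image]

theorem image_symm' (K : Finset (Fin 8 → ℝ)) (w : (Fin 8 → ℝ) ≃ₗ[ℝ] (Fin 8 → ℝ)) :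
    (K.image w.symm).image w = K := by
  ext x
  simp [Finset.mem_image]

theorem mx_image {K : Finset (Fin 8 → ℝ)} {c : Set ℝ} (hK : IsMaxClique c K)
    {w : (Fin 8 → ℝ) ≃ₗ[ℝ] (Fin 8 → ℝ)} (hw : IsWeyl w) : IsMaxClique c (K.image w) := by
  refine ⟨cl_image hK.1 hw, fun K' hK' hs => ?_⟩
  have := hK.2 (K'.image w.symm) (cl_image hK' hw.symm) (by
    have := Finset.image_subset_image (f := w.symm) hs
    rwa [image_symm] at this)
  rw [← this, image_symm']

def FK (l : List (List ℤ)) : Finset (Fin 8 → ℝ) := ((l ++ l.map negL).map phi).toFinset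

theorem mem_FK {l : List (List ℤ)} {x : Fin 8 → ℝ} :
    x ∈ FK l ↔ ∃ u ∈ l, x = phi u ∨ x = -phi u := by
  simp only [FK, List.mem_toFinset, List.mem_map, List.mem_append]
  constructor
  · rintro ⟨v, hv | ⟨u, hu, rfl⟩, rfl⟩
    · exact ⟨v, hv, Or.inl rfl⟩
    · exact ⟨u, hu, Or.inr (phi_neg u)⟩
  · rintro ⟨u, hu, rfl | rfl⟩
    · exact ⟨u, Or.inl hu, rfl⟩
    · exact ⟨negL u, Or.inr ⟨u, hu, rfl⟩, phi_neg u⟩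

theorem negL_length (u : List ℤ) : (negL u).length = u.length := by simp [negL]

theorem app_len8 {l : List (List ℤ)} (hl : l ∈ L15) : ∀ v ∈ l ++ l.map negL, v.length = 8 := by
  intro v hv
  rcases List.mem_append.1 hv with h | h
  · exact RL_len8 v (L15_RL l hl v h)
  · obtain ⟨u, hu, rfl⟩ := List.mem_map.1 h
    rw [negL_length]
    exact RL_len8 u (L15_RL l hl u hu)

theorem mem_of_FK {l : List (List ℤ)} (hl : l ∈ L15) {v : List ℤ} (hv : v ∈ RL)
    (h : phi v ∈ FK l) : v ∈ l ++ l.map negL := by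
  simp only [FK, List.mem_toFinset, List.mem_map] at h
  obtain ⟨u, hu, he⟩ := h
  rw [← phi_inj (app_len8 hl u hu) (RL_len8 v hv) he]
  exact hu

theorem FK_card {l : List (List ℤ)} (hl : l ∈ L15) : (FK l).card = 16 := by
  rw [FK, List.toFinset_card_of_nodup]
  · simp [L15_len l hl]
  · exact (L15_fnodup l hl).map_on fun x hx y hy h => phi_inj (app_len8 hl x hx) (app_len8 hl y hy) h

theorem l_dot {l : List (List ℤ)} (hl : l ∈ L15) {u v : List ℤ} (hu : u ∈ l) (hv : v ∈ l) :
    u = v ∨ dot (phi u) (phi v) = 0 := by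
  by_cases h : u = v
  · exact Or.inl h
  · right
    rw [dot_phi0 (L15_RL l hl u hu) (L15_RL l hl v hv)]
    have hs : Std.Symm (fun u v : List ℤ => dotL u v = 0) := by
      refine ⟨fun a b h => ?_⟩
      rw [← h]
      clear h
      induction a generalizing b with
      | nil => cases b <;> rfl
      | cons x a ih =>
        cases b with
        | nil => rfl
        | cons y b => simp only [dotL, ih b]; ring
    exact (L15_orth l hl).forall hu hv h

theorem FK_cl {l : List (List ℤ)} (hl : l ∈ L15) : IsClique {-2, 0} (FK l) := by
  have hr : ∀ u ∈ l, isRoot (phi u) := fun u hu => root_phi (L15_RL l hl u hu)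
  constructor
  · intro e he
    obtain ⟨u, hu, rfl | rfl⟩ := mem_FK.1 he
    · exact hr u hu
    · exact root_neg (hr u hu)
  · intro e he f hf hne
    obtain ⟨u, hu, hue⟩ := mem_FK.1 he
    obtain ⟨v, hv, hvf⟩ := mem_FK.1 hf
    rcases l_dot hl hu hv with rfl | h
    · left
      have h2 := (hr u hu).2
      rcases hue with rfl | rfl <;> rcases hvf with rfl | rfl <;>
        simp_all [dot_neg_left, dot_neg_right]
    · right
      rcases hue with rfl | rfl <;> rcases hvf with rfl | rfl <;>
        simp [dot_neg_left, dot_neg_right, h]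

theorem FK_mx {l : List (List ℤ)} (hl : l ∈ L15) : IsMaxClique {-2, 0} (FK l) := by
  refine ⟨FK_cl hl, fun K hK hs => Finset.Subset.antisymm ?_ hs⟩
  intro f hf
  obtain ⟨u, hu, rfl⟩ := root_imp (hK.1 f hf)
  obtain ⟨v, hv, hne⟩ := L15_max l hl u hu
  have hv' : phi v ∈ K := hs (mem_FK.2 ⟨v, hv, Or.inl rfl⟩)
  rcases cl_dot hK hf hv' with h | h | h
  · rw [dot_comm, dot_phi0 (L15_RL l hl v hv) hu] at h
    exact absurd h hne
  · exact mem_FK.2 ⟨v, hv, Or.inl h⟩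
  · exact mem_FK.2 ⟨v, hv, Or.inr h⟩

theorem chk_spec (L : List (List (List ℤ))) (S : List ℤ → Prop)
    (hS : ∀ u v, S u → S v → okL u v = true) (P : List (List ℤ)) :
    ∀ c, (∀ u ∈ c, S u) → chk L P c = true →
      ∃ l ∈ L, (∀ u ∈ c, u ∈ l) ∧ ∀ u ∈ P, S u → u ∈ l := by
  induction P with
  | nil =>
    intro c hc h
    simp only [chk, List.any_eq_true, List.all_eq_true, List.contains_iff_mem] at h
    obtain ⟨l, hl, h⟩ := h
    exact ⟨l, hl, h, by simp⟩
  | cons v P ih =>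
    intro c hc h
    simp only [chk, Bool.and_eq_true, Bool.or_eq_true] at h
    by_cases hv : S v
    · have h1 : (c.all fun u => okL u v) = true := by
        rw [List.all_eq_true]
        exact fun u hu => hS u v (hc u hu) hv
      rw [h1] at h
      obtain ⟨l, hl, h2, h3⟩ := ih (v :: c) (by simpa [hv] using hc) (by simpa using h.1)
      refine ⟨l, hl, fun u hu => h2 u (by simp [hu]), fun u hu hSu => ?_⟩
      rcases List.mem_cons.1 hu with rfl | hu
      · exact h2 u (by simp)
      · exact h3 u hu hSu
    · obtain ⟨l, hl, h2, h3⟩ := ih c hc h.2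
      refine ⟨l, hl, h2, fun u hu hSu => ?_⟩
      rcases List.mem_cons.1 hu with rfl | hu
      · exact absurd hSu hv
      · exact h3 u hu hSu

theorem ok_of {K : Finset (Fin 8 → ℝ)} (hK : IsClique {-2, 0} K) {u v : List ℤ} (hu : u ∈ RL)
    (hv : v ∈ RL) (h1 : phi u ∈ K) (h2 : phi v ∈ K) : okL u v = true := by
  simp only [okL, Bool.or_eq_true, decide_eq_true_eq]
  have hd := dot_phi (RL_len8 u hu) (RL_len8 v hv)
  have hr := (root_phi hv).2
  rcases cl_dot hK h1 h2 with h | h | h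
  · left; left
    exact (dot_phi0 hu hv).1 h
  · left; right
    rw [h, hr] at hd
    have : (dotL u v : ℝ) = 8 := by linarith
    exact_mod_cast this
  · right
    rw [h, dot_neg_left, hr] at hd
    have : (dotL u v : ℝ) = -8 := by linarith
    exact_mod_cast this

theorem mx_t01 {K : Finset (Fin 8 → ℝ)} (hK : IsMaxClique {-2, 0} K) (h0 : phi t0 ∈ K)
    (h1 : phi t1 ∈ K) : ∃ l ∈ L15, K = FK l := by
  obtain ⟨m0, m1, -, -⟩ := t_mem
  obtain ⟨l, hl, h2, h3⟩ := chk_spec L15 (fun u => u ∈ RL ∧ phi u ∈ K)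
    (fun u v hu hv => ok_of hK.1 hu.1 hv.1 hu.2 hv.2) P30 [t1, t0]
    (by simp [h0, h1, m0, m1]) chk_true
  have h4 : ∀ u ∈ t0 :: t1 :: P30, phi u ∈ K → u ∈ l := by
    intro u hu hk
    simp only [List.mem_cons] at hu
    rcases hu with rfl | rfl | hu
    · exact h2 _ (by simp)
    · exact h2 _ (by simp)
    · exact h3 u hu ⟨P30_RL u hu, hk⟩
  refine ⟨l, hl, ?_⟩
  symm
  apply hK.2 _ (FK_cl hl)
  intro f hf
  obtain ⟨u, hu, rfl⟩ := root_imp (hK.1.1 f hf)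
  rcases cover u hu (ok_of hK.1 hu m0 hf h0) (ok_of hK.1 hu m1 hf h1) with h | h
  · exact mem_FK.2 ⟨u, h4 u h hf, Or.inl rfl⟩
  · refine mem_FK.2 ⟨negL u, h4 _ h ?_, Or.inr ?_⟩
    · rw [phi_neg]; exact mx_neg hK hf
    · rw [phi_neg, neg_neg]

theorem mx_to_t0 {e : Fin 8 → ℝ} (he : isRoot e) : ∃ w, IsWeyl w ∧ w e = phi t0 := by
  obtain ⟨u, hu, rfl⟩ := root_imp he
  obtain ⟨w, hw, h1, -⟩ := move (T := []) (by simp) t_mem.1 hu (by simp) (by simp) (link0 u hu)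
  exact ⟨w, hw, h1⟩

theorem mx_to_t1 {e : Fin 8 → ℝ} (he : isRoot e) (h0 : dot (phi t0) e = 0) :
    ∃ w, IsWeyl w ∧ w e = phi t1 ∧ w (phi t0) = phi t0 := by
  obtain ⟨u, hu, rfl⟩ := root_imp he
  have h0' := (dot_phi0 t_mem.1 hu).1 h0
  obtain ⟨w, hw, h1, h2⟩ := move (T := [t0]) (by simp [t_mem.1]) t_mem.2.1 hu
    (by simp [t_orth.1]) (by simp [h0']) (link1 u hu h0')
  exact ⟨w, hw, h1, h2 t0 (by simp)⟩

theorem mx_std {K : Finset (Fin 8 → ℝ)} (hK : IsMaxClique {-2, 0} K) :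
    ∃ w, IsWeyl w ∧ K.image w = FK (fr 2 3 4 5 6 7) := by
  obtain ⟨m0, m1, m2, m3⟩ := t_mem
  obtain ⟨o01, o02, o12, o03, o13, o23⟩ := t_orth
  have hne : ∃ e, e ∈ K := by
    by_contra h
    push Not at h
    exact h _ (mx_ext hK (root_phi m0) (fun g hg => absurd hg (h g)))
  obtain ⟨e, he⟩ := hne
  obtain ⟨w0, hw0, he0⟩ := mx_to_t0 (hK.1.1 e he)
  have hK0 := mx_image hK hw0
  have k00 : phi t0 ∈ K.image w0 := Finset.mem_image.2 ⟨e, he, he0⟩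
  obtain ⟨f, hf, hf0⟩ : ∃ f ∈ K.image w0, dot (phi t0) f = 0 := by
    by_contra h
    push Not at h
    have d : dot (phi t0) (phi t1) = 0 := (dot_phi0 m0 m1).2 o01
    refine h (phi t1) (mx_ext hK0 (root_phi m1) fun g hg => ?_) d
    left
    rcases cl_dot hK0.1 k00 hg with h' | h' | h'
    · exact absurd h' (h g hg)
    · rw [← h', dot_comm]; exact d
    · rw [h', dot_neg_left, neg_eq_zero] at d
      rw [dot_comm]; exact d
  obtain ⟨w1, hw1, hf1, hf2⟩ := mx_to_t1 (hK0.1.1 f hf) hf0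
  have hK1 := mx_image hK0 hw1
  obtain ⟨l, hl, e1⟩ := mx_t01 hK1 (Finset.mem_image.2 ⟨_, k00, hf2⟩)
    (Finset.mem_image.2 ⟨_, hf, hf1⟩)
  obtain ⟨u, hu, u0, u1⟩ := L15_sub l hl
  have hur := L15_RL l hl u hu
  obtain ⟨w2, hw2, a, b⟩ := move (T := [t0, t1]) (by simp [m0, m1]) m2 hur (by simp [o02, o12])
    (by simp [u0, u1]) (link2 u hur u0 u1)
  have hK2 := mx_image (FK_mx hl) hw2
  have inFK : ∀ {l : List (List ℤ)} {v : List ℤ}, v ∈ l → phi v ∈ FK l :=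
    fun hv => mem_FK.2 ⟨_, hv, Or.inl rfl⟩
  obtain ⟨l2, hl2, e2⟩ := mx_t01 hK2
    (Finset.mem_image.2 ⟨_, inFK (L15_t01 l hl).1, b t0 (by simp)⟩)
    (Finset.mem_image.2 ⟨_, inFK (L15_t01 l hl).2, b t1 (by simp)⟩)
  have k2 : phi t2 ∈ FK l2 := by
    rw [← e2]; exact Finset.mem_image.2 ⟨_, inFK hu, a⟩
  obtain ⟨v, hv, v0, v1, v2, v3⟩ := L15_t2 l2 hl2 (mem_of_FK hl2 m2 k2)
  have hvr := L15_RL l2 hl2 v hv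
  obtain ⟨w3, hw3, a', b'⟩ := move (T := [t0, t1, t2]) (by simp [m0, m1, m2]) m3 hvr
    (by simp [o03, o13, o23]) (by simp [v0, v1, v2]) v3
  have hK3 := mx_image (FK_mx hl2) hw3
  obtain ⟨l3, hl3, e3⟩ := mx_t01 hK3
    (Finset.mem_image.2 ⟨_, inFK (L15_t01 l2 hl2).1, b' t0 (by simp)⟩)
    (Finset.mem_image.2 ⟨_, inFK (L15_t01 l2 hl2).2, b' t1 (by simp)⟩)
  have k3 : phi t2 ∈ FK l3 := by
    rw [← e3]; exact Finset.mem_image.2 ⟨_, k2, b' t2 (by simp)⟩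
  have k3' : phi t3 ∈ FK l3 := by
    rw [← e3]; exact Finset.mem_image.2 ⟨_, inFK hv, a'⟩
  have := L15_t3 l3 hl3 (mem_of_FK hl3 m2 k3) (mem_of_FK hl3 m3 k3')
  refine ⟨((w0.trans w1).trans w2).trans w3, ((hw0.trans hw1).trans hw2).trans hw3, ?_⟩
  rw [← this, ← e3, ← e2, ← e1]
  simp only [Finset.image_image]
  rfl

theorem l0_mem : fr 2 3 4 5 6 7 ∈ L15 := by simp [L15]

theorem mx_card {K : Finset (Fin 8 → ℝ)} (hK : IsMaxClique {-2, 0} K) : K.card = 16 := by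
  obtain ⟨w, hw, h⟩ := mx_std hK
  rw [← FK_card l0_mem, ← h, Finset.card_image_of_injective _ w.injective]

/-! Part E: counting. -/

def RR : Finset (Fin 8 → ℝ) := (RL.map phi).toFinset

theorem mem_RR {a : Fin 8 → ℝ} : a ∈ RR ↔ isRoot a := by
  simp only [RR, List.mem_toFinset, List.mem_map]
  constructor
  · rintro ⟨u, hu, rfl⟩; exact root_phi hu
  · intro h
    obtain ⟨u, hu, rfl⟩ := root_imp h
    exact ⟨u, hu, rfl⟩

theorem card_phi {l : List (List ℤ)} (h : l.Nodup) (hl : ∀ u ∈ l, u ∈ RL) :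
    (l.map phi).toFinset.card = l.length := by
  rw [List.toFinset_card_of_nodup]
  · simp
  · exact h.map_on fun x hx y hy h => phi_inj (RL_len8 x (hl x hx)) (RL_len8 y (hl y hy)) h

theorem RR_card : RR.card = 240 := by
  rw [RR, card_phi RL_nodup (fun _ h => h), RL_length]

def RP : Finset (Fin 8 → ℝ) := ((RL.filter fun u => dotL u t0 = 0).map phi).toFinset

theorem RP_card : RP.card = 126 := by
  rw [RP, card_phi (RL_nodup.filter _) (fun _ h => (List.mem_filter.1 h).1), RL_perp_length]

theorem mem_RP {a : Fin 8 → ℝ} : a ∈ RP ↔ isRoot a ∧ dot a (phi t0) = 0 := by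
  simp only [RP, List.mem_toFinset, List.mem_map, List.mem_filter, decide_eq_true_eq]
  constructor
  · rintro ⟨u, ⟨hu, h⟩, rfl⟩; exact ⟨root_phi hu, (dot_phi0 hu t_mem.1).2 h⟩
  · rintro ⟨h, h'⟩
    obtain ⟨u, hu, rfl⟩ := root_imp h
    exact ⟨u, ⟨hu, (dot_phi0 hu t_mem.1).1 h'⟩, rfl⟩

open Classical in
def MF : Finset (Finset (Fin 8 → ℝ)) := RR.powerset.filter (IsMaxClique {-2, 0})

theorem mem_MF {K : Finset (Fin 8 → ℝ)} : K ∈ MF ↔ IsMaxClique {-2, 0} K := by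
  simp only [MF, Finset.mem_filter, Finset.mem_powerset, and_iff_right_iff_imp]
  intro h e he
  exact mem_RR.2 (h.1.1 e he)

def MM (a b : Fin 8 → ℝ) : Finset (Finset (Fin 8 → ℝ)) := MF.filter (fun K => a ∈ K ∧ b ∈ K)

theorem mem_MM {a b : Fin 8 → ℝ} {K : Finset (Fin 8 → ℝ)} :
    K ∈ MM a b ↔ IsMaxClique {-2, 0} K ∧ a ∈ K ∧ b ∈ K := by
  rw [MM, Finset.mem_filter, mem_MF]

theorem MM_le {w : (Fin 8 → ℝ) ≃ₗ[ℝ] (Fin 8 → ℝ)} (hw : IsWeyl w) (a b : Fin 8 → ℝ) :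
    (MM a b).card ≤ (MM (w a) (w b)).card := by
  apply Finset.card_le_card_of_injOn (fun K => K.image w)
  · intro K hK
    obtain ⟨h, h1, h2⟩ := mem_MM.1 hK
    exact mem_MM.2 ⟨mx_image h hw, Finset.mem_image_of_mem _ h1, Finset.mem_image_of_mem _ h2⟩
  · intro K _ K' _ h
    exact Finset.image_injective w.injective h

theorem MM_eq {w : (Fin 8 → ℝ) ≃ₗ[ℝ] (Fin 8 → ℝ)} (hw : IsWeyl w) {a b c d : Fin 8 → ℝ}
    (hc : w a = c) (hd : w b = d) : (MM a b).card = (MM c d).card := by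
  subst hc hd
  refine le_antisymm (MM_le hw a b) ?_
  have := MM_le hw.symm (w a) (w b)
  simpa using this

theorem MM_15 : (MM (phi t0) (phi t1)).card = 15 := by
  have : MM (phi t0) (phi t1) = L15.toFinset.image FK := by
    ext K
    rw [mem_MM, Finset.mem_image]
    constructor
    · rintro ⟨h, h0, h1⟩
      obtain ⟨l, hl, rfl⟩ := mx_t01 h h0 h1
      exact ⟨l, List.mem_toFinset.2 hl, rfl⟩
    · rintro ⟨l, hl, rfl⟩
      have hl := List.mem_toFinset.1 hl
      exact ⟨FK_mx hl, mem_FK.2 ⟨_, (L15_t01 l hl).1, Or.inl rfl⟩,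
        mem_FK.2 ⟨_, (L15_t01 l hl).2, Or.inl rfl⟩⟩
  rw [this, Finset.card_image_of_injOn, List.toFinset_card_of_nodup L15_nodup, L15_length]
  intro l hl l' hl' h
  have hl : l ∈ L15 := List.mem_toFinset.1 hl
  have hl' : l' ∈ L15 := List.mem_toFinset.1 hl'
  refine L15_inj l hl l' hl' fun u hu => mem_of_FK hl' (L15_RL l hl u hu) ?_
  have h : FK l = FK l' := h
  rw [← h]
  exact mem_FK.2 ⟨u, hu, Or.inl rfl⟩

theorem MM_135 : (MM (phi t0) (phi t0)).card = 135 := by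
  have := Finset.card_mul_eq_card_mul (s := RP) (t := MM (phi t0) (phi t0))
    (fun (e : Fin 8 → ℝ) (K : Finset (Fin 8 → ℝ)) => e ∈ K) (m := 15) (n := 14) ?_ ?_
  · rw [RP_card] at this; omega
  · intro e he
    obtain ⟨he, h0⟩ := mem_RP.1 he
    rw [dot_comm] at h0
    obtain ⟨w, hw, h1, h2⟩ := mx_to_t1 he h0
    rw [← MM_15, ← MM_eq hw h2 h1]
    refine congrArg Finset.card ?_
    ext K
    rw [Finset.mem_bipartiteAbove, mem_MM, mem_MM]
    exact ⟨fun h => ⟨h.1.1, h.1.2.1, h.2⟩, fun h => ⟨⟨h.1, h.2.1, h.2.1⟩, h.2.2⟩⟩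
  · intro K hK
    obtain ⟨h, h0, -⟩ := mem_MM.1 hK
    have : Finset.bipartiteBelow (fun (e : Fin 8 → ℝ) (K : Finset (Fin 8 → ℝ)) => e ∈ K) RP K =
        K \ {phi t0, -phi t0} := by
      have h2 := (root_phi t_mem.1).2
      ext e
      rw [Finset.mem_bipartiteBelow, mem_RP, Finset.mem_sdiff, Finset.mem_insert,
        Finset.mem_singleton]
      constructor
      · rintro ⟨⟨he, hd⟩, hk⟩
        refine ⟨hk, ?_⟩
        rintro (rfl | rfl)
        · rw [h2] at hd; norm_num at hd
        · rw [dot_neg_left, h2] at hd; norm_num at hd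
      · rintro ⟨hk, hn⟩
        refine ⟨⟨h.1.1 e hk, ?_⟩, hk⟩
        rcases cl_dot h.1 hk h0 with h' | h'
        · exact h'
        · exact absurd h' hn
    rw [this, Finset.card_sdiff_of_subset, mx_card h, Finset.card_pair]
    · intro h
      have h2 := (root_phi t_mem.1).2
      have h3 := h2
      nth_rewrite 1 [h] at h3
      rw [dot_neg_left, h2] at h3
      norm_num at h3
    · intro x hx
      simp only [Finset.mem_insert, Finset.mem_singleton] at hx
      rcases hx with rfl | rfl
      · exact h0
      · exact mx_neg h h0

theorem MF_card : MF.card = 2025 := by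
  have := Finset.card_mul_eq_card_mul (s := RR) (t := MF)
    (fun (e : Fin 8 → ℝ) (K : Finset (Fin 8 → ℝ)) => e ∈ K) (m := 135) (n := 16) ?_ ?_
  · rw [RR_card] at this; omega
  · intro e he
    obtain ⟨w, hw, h1⟩ := mx_to_t0 (mem_RR.1 he)
    rw [← MM_135, ← MM_eq hw h1 h1]
    refine congrArg Finset.card ?_
    ext K
    rw [Finset.mem_bipartiteAbove, mem_MM, mem_MF]
    exact ⟨fun h => ⟨h.1, h.2, h.2⟩, fun h => ⟨h.1, h.2.1⟩⟩
  · intro K hK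
    have h := mem_MF.1 hK
    rw [← mx_card h]
    refine congrArg Finset.card ?_
    ext e
    rw [Finset.mem_bipartiteBelow, mem_RR]
    exact ⟨fun h => h.2, fun he => ⟨h.1.1 e he, he⟩⟩

theorem mx_frame {K : Finset (Fin 8 → ℝ)} (hK : IsMaxClique {-2, 0} K) :
    ∃ e : Fin 8 → (Fin 8 → ℝ), (∀ i, isRoot (e i)) ∧
        (∀ i j, i ≠ j → dot (e i) (e j) = 0) ∧
        (K : Set (Fin 8 → ℝ)) = Set.range e ∪ Set.range (fun i => -(e i)) := by
  obtain ⟨w, hw, h⟩ := mx_std hK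
  have h0 := l0_mem
  have hlen := L15_len _ h0
  have horth := L15_orth _ h0
  have hR := L15_RL _ h0
  generalize fr 2 3 4 5 6 7 = l at h h0 hlen horth hR
  have hg : ∀ i : Fin 8, i.1 < l.length := fun i => by rw [hlen]; exact i.2
  have hlt : ∀ i j : Fin 8, i < j →
      dot (w.symm (phi (l[i.1]'(hg i)))) (w.symm (phi (l[j.1]'(hg j)))) = 0 := by
    intro i j hij
    rw [hw.symm.1, dot_phi0 (hR _ (List.getElem_mem _)) (hR _ (List.getElem_mem _))]
    exact List.pairwise_iff_getElem.1 horth _ _ _ _ hij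
  refine ⟨fun i => w.symm (phi (l[i.1]'(hg i))), ?_, ?_, ?_⟩
  · intro i
    exact hw.symm.root (root_phi (hR _ (List.getElem_mem _)))
  · intro i j hij
    rcases lt_or_gt_of_ne hij with h1 | h1
    · exact hlt i j h1
    · rw [dot_comm]; exact hlt j i h1
  · ext x
    have hx : x ∈ K ↔ w x ∈ FK l := by
      rw [← h]; simp
    rw [Finset.mem_coe, hx, mem_FK]
    constructor
    · rintro ⟨u, hu, h1⟩
      obtain ⟨n, hn, rfl⟩ := List.mem_iff_getElem.1 hu
      rcases h1 with h1 | h1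
      · left; exact ⟨⟨n, by omega⟩, by simp [← h1]⟩
      · right; exact ⟨⟨n, by omega⟩, by
          simp only
          rw [← map_neg, ← h1]; simp⟩
    · rintro (⟨i, rfl⟩ | ⟨i, rfl⟩)
      · exact ⟨_, List.getElem_mem (hg i), Or.inl (by simp)⟩
      · exact ⟨_, List.getElem_mem (hg i), Or.inr (by simp)⟩

/-- Every maximal clique in `Γ_{-2,0}` has size 16 and consists of
eight pairwise orthogonal roots together with their negatives; there are exactly
2025 maximal cliques in `Γ_{-2,0}`, and the Weyl group acts transitively on them. -/
theorem stmt_16 :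
    (∀ K : Finset (Fin 8 → ℝ), IsMaxClique {-2, 0} K →
      K.card = 16 ∧
      ∃ e : Fin 8 → (Fin 8 → ℝ), (∀ i, isRoot (e i)) ∧
        (∀ i j, i ≠ j → dot (e i) (e j) = 0) ∧
        (K : Set (Fin 8 → ℝ)) = Set.range e ∪ Set.range (fun i => -(e i))) ∧
    ({K : Finset (Fin 8 → ℝ) | IsMaxClique {-2, 0} K}.ncard = 2025) ∧
    (∀ K1 K2 : Finset (Fin 8 → ℝ), IsMaxClique {-2, 0} K1 → IsMaxClique {-2, 0} K2 →
      ∃ w : (Fin 8 → ℝ) ≃ₗ[ℝ] (Fin 8 → ℝ), IsWeyl w ∧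
        ⇑w '' (K1 : Set (Fin 8 → ℝ)) = (K2 : Set (Fin 8 → ℝ))) := by
  refine ⟨fun K hK => ⟨mx_card hK, mx_frame hK⟩, ?_, ?_⟩
  · have : {K : Finset (Fin 8 → ℝ) | IsMaxClique {-2, 0} K} = (MF : Set (Finset (Fin 8 → ℝ))) := by
      ext K
      rw [Finset.mem_coe, mem_MF]
      rfl
    rw [this, Set.ncard_coe_finset, MF_card]
  · intro K1 K2 h1 h2
    obtain ⟨w, hw, e1⟩ := mx_std h1
    obtain ⟨v, hv, e2⟩ := mx_std h2
    refine ⟨w.trans v.symm, hw.trans hv.symm, ?_⟩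
    have : (K1.image w).image v.symm = K2 := by
      rw [e1, ← e2, image_symm]
    rw [← this]
    rw [Finset.coe_image, Finset.coe_image, Set.image_image]
    rfl
end
end

section
/- Every clique in Γ_{-1,0} (i.e. every set of roots whose pairwise dot products lie in {-1,0}) of size greater than 10 contains four roots that are pairwise orthogonal. -/
noncomputable section

/-- Abstract cliques: squared norm 2, pairwise products -1 or 0. -/
def Cl (K : Finset (Fin 8 → ℝ)) : Prop :=
  (∀ e ∈ K, e ⬝ᵥ e = 2) ∧ ∀ e ∈ K, ∀ f ∈ K, e ≠ f → (e ⬝ᵥ f = -1 ∨ e ⬝ᵥ f = 0)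

theorem Cl.mono {K T : Finset (Fin 8 → ℝ)} (h : Cl K) (hT : T ⊆ K) : Cl T :=
  ⟨fun e he => h.1 e (hT he), fun e he f hf => h.2 e (hT he) f (hT hf)⟩

theorem Cl.nonpos {K : Finset (Fin 8 → ℝ)} (h : Cl K) {e f : Fin 8 → ℝ} (he : e ∈ K)
    (hf : f ∈ K) (hne : e ≠ f) : e ⬝ᵥ f ≤ 0 := by
  rcases h.2 e he f hf hne with h | h <;> rw [h] <;> norm_num

/-- rank of a finite set -/
def rk (K : Finset (Fin 8 → ℝ)) : ℕ := Module.finrank ℝ (Submodule.span ℝ (K : Set (Fin 8 → ℝ)))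

/-- `m` pairwise orthogonal elements. -/
def Orth (K : Finset (Fin 8 → ℝ)) (m : ℕ) : Prop :=
  ∃ s : Finset (Fin 8 → ℝ), s ⊆ K ∧ s.card = m ∧ ∀ e ∈ s, ∀ f ∈ s, e ≠ f → e ⬝ᵥ f = 0

theorem rk_add (S T : Finset (Fin 8 → ℝ)) (h : ∀ s ∈ S, ∀ t ∈ T, t ⬝ᵥ s = 0) :
    rk (S ∪ T) = rk S + rk T := by
  unfold rk
  rw [Finset.coe_union, Submodule.span_union]
  have hd : Disjoint (Submodule.span ℝ (S : Set (Fin 8 → ℝ)))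
      (Submodule.span ℝ (T : Set (Fin 8 → ℝ))) := by
    rw [Submodule.disjoint_def]
    intro x hx hx'
    have h1 : ∀ t ∈ T, t ⬝ᵥ x = 0 := by
      intro t ht
      clear hx'
      induction hx using Submodule.span_induction with
      | mem s hs => exact h s hs t ht
      | zero => simp
      | add a b _ _ ha hb => rw [dotProduct_add, ha, hb, add_zero]
      | smul c a _ ha => rw [dotProduct_smul, ha, smul_zero]
    have h2 : ∀ y ∈ Submodule.span ℝ (T : Set (Fin 8 → ℝ)), y ⬝ᵥ x = 0 := by
      intro y hy
      induction hy using Submodule.span_induction with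
      | mem s hs => exact h1 s hs
      | zero => simp
      | add a b _ _ ha hb => rw [add_dotProduct, ha, hb, add_zero]
      | smul c a _ ha => rw [smul_dotProduct, ha, smul_zero]
    exact dotProduct_self_eq_zero.1 (h2 x hx')
  have := Submodule.finrank_sup_add_finrank_inf_eq (Submodule.span ℝ (S : Set (Fin 8 → ℝ)))
      (Submodule.span ℝ (T : Set (Fin 8 → ℝ)))
  rw [hd.eq_bot] at this
  simpa using this

theorem exists_split (K : Finset (Fin 8 → ℝ)) (hK : Cl K) (hr : rk K < K.card) :
    ∃ S ⊆ K, S.Nonempty ∧ S.card ≤ rk S + 1 ∧ ∀ s ∈ S, ∀ t ∈ K \ S, t ⬝ᵥ s = 0 := by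
  classical
  have hdep : ∃ S ∈ K.powerset, ¬ LinearIndepOn ℝ id (S : Set (Fin 8 → ℝ)) := by
    refine ⟨K, by simp, fun hi => ?_⟩
    have := finrank_span_finset_eq_card (R := ℝ) (s := K) hi
    unfold rk at hr
    omega
  obtain ⟨S, hS, hmin⟩ := Finset.exists_min_image
    (K.powerset.filter (fun S : Finset (Fin 8 → ℝ) => ¬ LinearIndepOn ℝ id (S : Set (Fin 8 → ℝ)))) Finset.card
    (by obtain ⟨S, h1, h2⟩ := hdep; exact ⟨S, by simp only [Finset.mem_filter]; exact ⟨h1, h2⟩⟩)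
  simp only [Finset.mem_filter, Finset.mem_powerset] at hS hmin
  obtain ⟨hSK, hSd⟩ := hS
  have hSd' := hSd
  rw [linearIndepOn_finset_iff] at hSd'
  push Not at hSd'
  obtain ⟨f, hf, e, he, hfe⟩ := hSd'
  obtain ⟨f, hf, hfe⟩ : ∃ f : (Fin 8 → ℝ) → ℝ, ∑ i ∈ S, f i • i = 0 ∧ 0 < f e := by
    rcases lt_or_gt_of_ne hfe with h | h
    · refine ⟨fun i => - f i, ?_, by linarith⟩
      simpa using hf
    · exact ⟨f, by simpa using hf, h⟩
  have hp : ∑ i ∈ S, max (f i) 0 • i = 0 := by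
    have hpn : ∑ i ∈ S, max (f i) 0 • i = ∑ i ∈ S, max (-f i) 0 • i := by
      rw [← sub_eq_zero, ← Finset.sum_sub_distrib, ← hf]
      refine Finset.sum_congr rfl fun i _ => ?_
      rw [← sub_smul]
      congr 1
      rcases le_total (f i) 0 with h | h
      · rw [max_eq_right h, max_eq_left (by linarith)]; ring
      · rw [max_eq_left h, max_eq_right (by linarith)]; ring
    have hle : (∑ i ∈ S, max (f i) 0 • i) ⬝ᵥ (∑ i ∈ S, max (f i) 0 • i) ≤ 0 := by
      conv_lhs => rw [hpn]
      conv_lhs => arg 2; rw [← hpn]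
      rw [sum_dotProduct]
      refine Finset.sum_nonpos fun i hi => ?_
      rw [dotProduct_sum]
      refine Finset.sum_nonpos fun j hj => ?_
      rw [smul_dotProduct, dotProduct_smul, smul_eq_mul, smul_eq_mul]
      by_cases hij : i = j
      · subst hij
        rcases le_total (f i) 0 with h | h
        · rw [max_eq_right h]; simp
        · rw [max_eq_right (a := - f i) (by linarith)]; simp
      · have := hK.nonpos (hSK hi) (hSK hj) hij
        exact mul_nonpos_of_nonneg_of_nonpos (le_max_right _ _)
          (mul_nonpos_of_nonneg_of_nonpos (le_max_right _ _) this)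
    rw [← dotProduct_self_eq_zero]
    refine le_antisymm hle ?_
    unfold dotProduct
    exact Finset.sum_nonneg fun i _ => mul_self_nonneg _
  have hpos : ∀ i ∈ S, 0 < f i := by
    set P := S.filter (fun i => 0 < f i) with hP
    have hPd : ¬ LinearIndepOn ℝ id (P : Set (Fin 8 → ℝ)) := by
      rw [linearIndepOn_finset_iff]
      intro h
      have h1 : ∑ i ∈ P, max (f i) 0 • id i = 0 := by
        rw [← hp, hP, Finset.sum_filter]
        refine Finset.sum_congr rfl fun i _ => ?_
        split_ifs with h
        · rfl
        · rw [max_eq_right (by linarith)]; simp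
      have := h _ h1 e (by simp [hP, he, hfe])
      rw [max_eq_left hfe.le] at this
      linarith
    have hPS : P ⊆ S := Finset.filter_subset _ _
    have := Finset.eq_of_subset_of_card_le hPS (hmin P ⟨hPS.trans hSK, hPd⟩)
    intro i hi
    rw [← this] at hi
    exact (Finset.mem_filter.1 hi).2
  refine ⟨S, hSK, ⟨e, he⟩, ?_, ?_⟩
  · have hi : LinearIndepOn ℝ id ((S.erase e : Finset _) : Set (Fin 8 → ℝ)) := by
      by_contra hcon
      have := hmin (S.erase e) ⟨(Finset.erase_subset _ _).trans hSK, hcon⟩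
      have := Finset.card_erase_lt_of_mem he
      omega
    have h1 := finrank_span_finset_eq_card (R := ℝ) (s := S.erase e) hi
    have h2 := Submodule.finrank_mono (Submodule.span_mono (R := ℝ)
      (Finset.coe_subset.2 (Finset.erase_subset e S)))
    rw [Finset.card_erase_of_mem he] at h1
    unfold rk
    omega
  · intro s hs t ht
    rw [Finset.mem_sdiff] at ht
    have h0 : ∑ i ∈ S, f i * (t ⬝ᵥ i) = 0 := by
      have : t ⬝ᵥ (∑ i ∈ S, f i • i) = 0 := by rw [hf]; simp
      rw [dotProduct_sum] at this
      simpa [dotProduct_smul] using this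
    have hle : ∀ i ∈ S, f i * (t ⬝ᵥ i) ≤ 0 := fun i hi =>
      mul_nonpos_of_nonneg_of_nonpos (hpos i hi).le
        (hK.nonpos ht.1 (hSK hi) (fun h => ht.2 (h ▸ hi)))
    have := (Finset.sum_eq_zero_iff_of_nonpos hle).1 h0 s hs
    exact (mul_eq_zero.1 this).resolve_left (hpos s hs).ne'

theorem orth_union {K S : Finset (Fin 8 → ℝ)} (hS : S ⊆ K)
    (h : ∀ s ∈ S, ∀ t ∈ K \ S, t ⬝ᵥ s = 0) {a b : ℕ} (ha : Orth S a) (hb : Orth (K \ S) b) :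
    Orth K (a + b) := by
  classical
  obtain ⟨s, hs, hsc, hso⟩ := ha
  obtain ⟨t, ht, htc, hto⟩ := hb
  refine ⟨s ∪ t, Finset.union_subset (hs.trans hS) (ht.trans Finset.sdiff_subset), ?_, ?_⟩
  · rw [Finset.card_union_of_disjoint, hsc, htc]
    exact Finset.disjoint_of_subset_left hs (Finset.disjoint_of_subset_right ht Finset.disjoint_sdiff)
  · intro e he f hf hne
    rcases Finset.mem_union.1 he with he | he <;> rcases Finset.mem_union.1 hf with hf | hf
    · exact hso e he f hf hne
    · rw [dotProduct_comm]; exact h e (hs he) f (ht hf)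
    · exact h f (hs hf) e (ht he)
    · exact hto e he f hf hne

theorem orth_one {S : Finset (Fin 8 → ℝ)} (h : S.Nonempty) : Orth S 1 := by
  obtain ⟨e, he⟩ := h
  refine ⟨{e}, by simpa using he, by simp, ?_⟩
  intro a ha b hb hne
  simp only [Finset.mem_singleton] at ha hb
  exact absurd (ha.trans hb.symm) hne

theorem orth_two {S : Finset (Fin 8 → ℝ)} (h : Cl S) (hc : 3 < S.card) : Orth S 2 := by
  classical
  by_contra hcon
  have hadj : ∀ e ∈ S, ∀ f ∈ S, e ≠ f → e ⬝ᵥ f = -1 := by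
    intro e he f hf hne
    refine (h.2 e he f hf hne).resolve_right fun h0 => hcon ⟨{e, f}, ?_, Finset.card_pair hne, ?_⟩
    · intro x hx
      simp only [Finset.mem_insert, Finset.mem_singleton] at hx
      rcases hx with rfl | rfl <;> assumption
    · intro a ha b hb hab
      simp only [Finset.mem_insert, Finset.mem_singleton] at ha hb
      rcases ha with rfl | rfl <;> rcases hb with rfl | rfl
      · exact absurd rfl hab
      · exact h0
      · rw [dotProduct_comm]; exact h0
      · exact absurd rfl hab
  have hnn : 0 ≤ (∑ i ∈ S, i) ⬝ᵥ (∑ i ∈ S, i) := by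
    unfold dotProduct
    exact Finset.sum_nonneg fun i _ => mul_self_nonneg _
  rw [sum_dotProduct] at hnn
  have : ∀ i ∈ S, i ⬝ᵥ (∑ j ∈ S, j) = 3 - S.card := by
    intro i hi
    rw [dotProduct_sum, ← Finset.add_sum_erase _ _ hi, h.1 i hi,
      Finset.sum_congr rfl (g := fun _ => (-1 : ℝ))]
    · rw [Finset.sum_const, Finset.card_erase_of_mem hi, nsmul_eq_mul, Nat.cast_sub (by omega)]
      push_cast; ring
    · intro j hj
      rw [Finset.mem_erase] at hj
      exact hadj i hi j hj.2 (Ne.symm hj.1)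
  rw [Finset.sum_congr rfl this, Finset.sum_const, nsmul_eq_mul] at hnn
  have h3 : (4 : ℝ) ≤ S.card := by exact_mod_cast hc
  nlinarith

theorem split' (K : Finset (Fin 8 → ℝ)) (hK : Cl K) (k : ℕ) (hr : rk K + (k + 1) ≤ K.card) :
    ∃ S ⊆ K, S.Nonempty ∧ (∀ s ∈ S, ∀ t ∈ K \ S, t ⬝ᵥ s = 0) ∧
      rk (K \ S) + k ≤ (K \ S).card := by
  obtain ⟨S, hS, hne, hc, ho⟩ := exists_split K hK (by omega)
  refine ⟨S, hS, hne, ho, ?_⟩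
  have h1 := rk_add S (K \ S) ho
  rw [Finset.union_sdiff_of_subset hS] at h1
  have := Finset.card_sdiff_add_card_eq_card hS
  omega

theorem orthL (k : ℕ) : ∀ K : Finset (Fin 8 → ℝ), Cl K → rk K + k ≤ K.card → Orth K k := by
  induction k with
  | zero => intro K _ _; exact ⟨∅, by simp, by simp, by simp⟩
  | succ k ih =>
    intro K hK hr
    obtain ⟨S, hS, hne, ho, hT⟩ := split' K hK k hr
    rw [add_comm]
    exact orth_union hS ho (orth_one hne) (ih _ (hK.mono Finset.sdiff_subset) hT)

theorem orthL' (k : ℕ) : ∀ K : Finset (Fin 8 → ℝ), Cl K → rk K + k ≤ K.card →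
    3 * k < K.card → Orth K (k + 1) := by
  induction k with
  | zero => intro K _ _ h; exact orth_one (Finset.card_pos.1 (by omega))
  | succ k ih =>
    intro K hK hr hc
    obtain ⟨S, hS, hne, ho, hT⟩ := split' K hK k hr
    have hKT := hK.mono (Finset.sdiff_subset (s := K) (t := S))
    have hcard := Finset.card_sdiff_add_card_eq_card hS
    by_cases h3 : 3 < S.card
    · rw [show k + 1 + 1 = 2 + k by ring]
      exact orth_union hS ho (orth_two (hK.mono hS) h3) (orthL k _ hKT hT)
    · rw [add_comm]
      exact orth_union hS ho (orth_one hne) (ih _ hKT hT (by omega))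

/-- Every clique in `Γ_{-1,0}` of size greater than 10 contains four
pairwise orthogonal roots. -/
theorem stmt_17 (K : Finset (Fin 8 → ℝ)) (h : IsClique {-1, 0} K)
    (hcard : 10 < K.card) :
    ∃ s : Finset (Fin 8 → ℝ), s ⊆ K ∧ s.card = 4 ∧
      ∀ e ∈ s, ∀ f ∈ s, e ≠ f → dot e f = 0 := by
  have hC : Cl K := by
    refine ⟨fun e he => (h.1 e he).2, fun e he f hf hne => ?_⟩
    have := h.2 e he f hf hne
    simpa [dot, dotProduct] using this
  have hr : ∀ L : Finset (Fin 8 → ℝ), rk L ≤ 8 := fun L => by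
    have := Submodule.finrank_le (Submodule.span ℝ (L : Set (Fin 8 → ℝ)))
    simpa [rk] using this
  have := hr K
  exact orthL' 3 K hC (by omega) (by omega)
end
end
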